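/- Let a, c ∈ ℝ and b ≠ 0, set D := (a−c)² + 4b² > 0, and let û₁ := (0, (a−c−√D)/(2b), 1)/ρ₁ and û₃ := (0, (a−c+√D)/(2b), 1)/ρ₂ (with ρ₁, ρ₂ > 0 normalizing factors) be the unit eigenvectors of U₁ := [[d,0,0],[0,a,b],[0,b,c]] corresponding to the eigenvalues (a+c−√D)/2 and (a+c+√D)/2 respectively. Then: (a) if (û₁ · ê_A) = −(û₃ · ê_A), where ê_A := (0,1,0), then a = c; (b) (û₁ · ê_B) ≠ −(û₃ · ê_B), where ê_B := (0,1,1)/√2, unless a = c. (Hence the conventional compound twin pairs of the cubic-to-monoclinic-II transformation cannot form two distinct triple clusters of the same kind with austenite.) -/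

import Mathlib

open Matrix

noncomputable section

abbrev V3 : Type := Fin 3 → ℝ
abbrev M3 : Type := Matrix (Fin 3) (Fin 3) ℝ

/-!
The unit eigenvectors `û₁`, `û₃` of the symmetric matrix `U₁`, with eigenvalues `μ₁ ≠ μ₃`, form an
orthonormal basis of the plane `x = 0`. For `e = (0, y, z)`, the expansions of `e ⬝ U₁ e` and
`e ⬝ e` in this basis and `μ₁ + μ₃ = a + c` give
`(μ₁ - μ₃) ((û₁ ⬝ e)² - (û₃ ⬝ e)²) = 2 (e ⬝ U₁ e) - (a + c) (e ⬝ e) = (a - c) (y² - z²) + 4 b y z`.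
At `ê_A` the right-hand side is `a - c`, and at `ê_B` it is `2 b`.
-/

section OrthonormalEigenvectors

variable {n R : Type*} [Fintype n] [CommRing R]

theorem dotProduct_eq_zero_of_mulVec_eq_smul [NoZeroDivisors R] {A : Matrix n n R}
    (hA : A.IsSymm) {u v : n → R} {μ ν : R} (hu : A *ᵥ u = μ • u) (hv : A *ᵥ v = ν • v)
    (hμν : μ ≠ ν) : u ⬝ᵥ v = 0 := by
  have h : μ * (u ⬝ᵥ v) = ν * (u ⬝ᵥ v) :=
    calc μ * (u ⬝ᵥ v) = (A *ᵥ u) ⬝ᵥ v := by rw [hu, smul_dotProduct, smul_eq_mul]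
      _ = u ⬝ᵥ A *ᵥ v := by rw [dotProduct_mulVec, ← mulVec_transpose, hA.eq]
      _ = ν * (u ⬝ᵥ v) := by rw [hv, dotProduct_smul, smul_eq_mul]
  exact (mul_eq_mul_right_iff.mp h).resolve_left hμν

variable [DecidableEq n] {A P : Matrix n n R} {μ : n → R}

theorem eq_transpose_mul_diagonal_mul_of_mulVec_row (hP : P * Pᵀ = 1)
    (hA : ∀ i, A *ᵥ P i = μ i • P i) : A = Pᵀ * diagonal μ * P := by
  have hAP : A * Pᵀ = Pᵀ * diagonal μ := by
    ext i j
    rw [mul_diagonal, transpose_apply, mul_comm]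
    exact congrFun (hA j) i
  rw [← hAP, Matrix.mul_assoc, mul_eq_one_comm.mp hP, Matrix.mul_one]

theorem trace_eq_sum_of_mulVec_row (hP : P * Pᵀ = 1)
    (hA : ∀ i, A *ᵥ P i = μ i • P i) : A.trace = ∑ i, μ i := by
  rw [eq_transpose_mul_diagonal_mul_of_mulVec_row hP hA, trace_mul_comm, ← Matrix.mul_assoc, hP,
    Matrix.one_mul, trace_diagonal]

theorem dotProduct_mulVec_eq_sum_of_mulVec_row (hP : P * Pᵀ = 1)
    (hA : ∀ i, A *ᵥ P i = μ i • P i) (e : n → R) :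
    e ⬝ᵥ A *ᵥ e = ∑ i, μ i * (P i ⬝ᵥ e) ^ 2 :=
  calc e ⬝ᵥ A *ᵥ e = (P *ᵥ e) ⬝ᵥ diagonal μ *ᵥ (P *ᵥ e) := by
        rw [eq_transpose_mul_diagonal_mul_of_mulVec_row hP hA, ← mulVec_mulVec, ← mulVec_mulVec,
          dotProduct_mulVec, vecMul_transpose]
    _ = ∑ i, μ i * (P i ⬝ᵥ e) ^ 2 :=
        Finset.sum_congr rfl fun i _ => by rw [mulVec_diagonal, mulVec]; ring

theorem dotProduct_self_eq_sum_sq_row (hP : P * Pᵀ = 1) (e : n → R) :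
    e ⬝ᵥ e = ∑ i, (P i ⬝ᵥ e) ^ 2 := by
  simpa only [one_mulVec, one_mul] using
    dotProduct_mulVec_eq_sum_of_mulVec_row (A := 1) (μ := fun _ => 1) hP
      (fun i => by rw [one_mulVec, one_smul]) e

end OrthonormalEigenvectors

theorem axis_rows_mul_transpose {R : Type*} [CommRing R] {u v : Fin 3 → R} (hu₀ : u 0 = 0)
    (hv₀ : v 0 = 0) (hu : u ⬝ᵥ u = 1) (hv : v ⬝ᵥ v = 1) (huv : u ⬝ᵥ v = 0) :
    of ![![1, 0, 0], u, v] * (of ![![1, 0, 0], u, v])ᵀ = 1 := by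
  have hvu : v ⬝ᵥ u = 0 := by rw [dotProduct_comm, huv]
  ext i j
  change ![![1, 0, 0], u, v] i ⬝ᵥ ![![1, 0, 0], u, v] j = _
  fin_cases i <;> fin_cases j <;> simp [hu₀, hv₀, hu, hv, huv, hvu, vecHead]

/-- The transformation stretch matrix `U₁` of the cubic-to-monoclinic-II transformation, whose
monoclinic axis is the first coordinate axis. -/
def monoclinicStretch (a b c d : ℝ) : M3 := !![d, 0, 0; 0, a, b; 0, b, c]

namespace monoclinicStretch

variable {a b c d μ₁ μ₃ : ℝ} {u₁ u₃ : V3}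

theorem isSymm (a b c d : ℝ) : (monoclinicStretch a b c d).IsSymm := by
  ext i j
  fin_cases i <;> fin_cases j <;> rfl

theorem trace_eq (a b c d : ℝ) : (monoclinicStretch a b c d).trace = d + a + c := by
  simp [monoclinicStretch, trace_fin_three]

theorem mulVec_axis (a b c d : ℝ) : monoclinicStretch a b c d *ᵥ ![1, 0, 0] = d • ![1, 0, 0] := by
  ext i
  fin_cases i <;> simp [monoclinicStretch]

theorem dotProduct_mulVec_self (a b c d y z : ℝ) :
    ![0, y, z] ⬝ᵥ monoclinicStretch a b c d *ᵥ ![0, y, z] =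
      a * y ^ 2 + 2 * b * y * z + c * z ^ 2 := by
  have hmulVec : monoclinicStretch a b c d *ᵥ ![0, y, z] =
      ![0, a * y + b * z, b * y + c * z] := by
    ext i
    fin_cases i <;> simp [monoclinicStretch, mulVec, vecHead, vecTail]
  rw [hmulVec, vec3_dotProduct']
  ring

theorem sub_mul_sq_dotProduct_sub_sq (h₁ : u₁ 0 = 0) (h₃ : u₃ 0 = 0) (hu₁ : u₁ ⬝ᵥ u₁ = 1)
    (hu₃ : u₃ ⬝ᵥ u₃ = 1) (hu : u₁ ⬝ᵥ u₃ = 0)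
    (heig₁ : monoclinicStretch a b c d *ᵥ u₁ = μ₁ • u₁)
    (heig₃ : monoclinicStretch a b c d *ᵥ u₃ = μ₃ • u₃) (y z : ℝ) :
    (μ₁ - μ₃) * ((u₁ ⬝ᵥ ![0, y, z]) ^ 2 - (u₃ ⬝ᵥ ![0, y, z]) ^ 2) =
      (a - c) * (y ^ 2 - z ^ 2) + 4 * b * y * z := by
  set P : M3 := of ![![1, 0, 0], u₁, u₃]
  have hP : P * Pᵀ = 1 := axis_rows_mul_transpose h₁ h₃ hu₁ hu₃ hu
  have hA : ∀ i, monoclinicStretch a b c d *ᵥ P i = ![d, μ₁, μ₃] i • P i :=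
    Fin.forall_fin_succ.mpr ⟨mulVec_axis a b c d, Fin.forall_fin_two.mpr ⟨heig₁, heig₃⟩⟩
  have htrace : d + a + c = d + μ₁ + μ₃ := by
    simpa [trace_eq, Fin.sum_univ_three] using trace_eq_sum_of_mulVec_row hP hA
  have haxis : ![1, 0, 0] ⬝ᵥ ![0, y, z] = 0 := by simp
  have hquad : a * y ^ 2 + 2 * b * y * z + c * z ^ 2 =
      d * (![1, 0, 0] ⬝ᵥ ![0, y, z]) ^ 2 + μ₁ * (u₁ ⬝ᵥ ![0, y, z]) ^ 2 +
        μ₃ * (u₃ ⬝ᵥ ![0, y, z]) ^ 2 := by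
    rw [← dotProduct_mulVec_self a b c d, dotProduct_mulVec_eq_sum_of_mulVec_row hP hA,
      Fin.sum_univ_three]
    rfl
  have hnorm : y ^ 2 + z ^ 2 =
      (![1, 0, 0] ⬝ᵥ ![0, y, z]) ^ 2 + (u₁ ⬝ᵥ ![0, y, z]) ^ 2 + (u₃ ⬝ᵥ ![0, y, z]) ^ 2 := by
    have hself : ![0, y, z] ⬝ᵥ ![0, y, z] = y ^ 2 + z ^ 2 := by simp [sq]
    rw [← hself, dotProduct_self_eq_sum_sq_row hP, Fin.sum_univ_three]
    rfl
  rw [haxis] at hquad hnorm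
  linear_combination (y ^ 2 + z ^ 2) * htrace - 2 * hquad + (μ₁ + μ₃) * hnorm

end monoclinicStretch

theorem monoclinic_compound_no_double_cluster_general {a b c d μ₁ μ₃ : ℝ} (hμ : μ₁ ≠ μ₃)
    {u₁ u₃ : V3} (h₁ : u₁ 0 = 0) (h₃ : u₃ 0 = 0) (hu₁ : u₁ ⬝ᵥ u₁ = 1) (hu₃ : u₃ ⬝ᵥ u₃ = 1)
    (heig₁ : monoclinicStretch a b c d *ᵥ u₁ = μ₁ • u₁)
    (heig₃ : monoclinicStretch a b c d *ᵥ u₃ = μ₃ • u₃) (y z : ℝ) :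
    (u₁ ⬝ᵥ ![0, y, z]) ^ 2 = (u₃ ⬝ᵥ ![0, y, z]) ^ 2 ↔
      (a - c) * (y ^ 2 - z ^ 2) + 4 * b * y * z = 0 := by
  have hu : u₁ ⬝ᵥ u₃ = 0 :=
    dotProduct_eq_zero_of_mulVec_eq_smul (monoclinicStretch.isSymm a b c d) heig₁ heig₃ hμ
  rw [← monoclinicStretch.sub_mul_sq_dotProduct_sub_sq h₁ h₃ hu₁ hu₃ hu heig₁ heig₃ y z,
    mul_eq_zero_iff_left (sub_ne_zero.mpr hμ), sub_eq_zero]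

/-- **Compound twins of the cubic-to-monoclinic-II transformation cannot form
two distinct triple clusters of the same kind.** With `b ≠ 0`,
`D = (a−c)² + 4b²`, and `û₁, û₃` the unit eigenvectors of
`U₁ = [[d,0,0],[0,a,b],[0,b,c]]` given by the stated formulas:
(a) `(û₁·ê_A) = −(û₃·ê_A)` (with `ê_A = (0,1,0)`) implies `a = c`;
(b) `(û₁·ê_B) = −(û₃·ê_B)` (with `ê_B = (0,1,1)/√2`) implies `a = c`. -/
theorem monoclinic_compound_no_double_cluster
    (a b c d : ℝ) (hb : b ≠ 0)
    (D : ℝ) (hD : D = (a - c) ^ 2 + 4 * b ^ 2) (hDpos : 0 < D)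
    (ρ1 ρ2 : ℝ) (hρ1 : 0 < ρ1) (hρ2 : 0 < ρ2)
    (u1 u3 : V3)
    (hu1 : u1 = (1 / ρ1) • ![0, (a - c - Real.sqrt D) / (2 * b), 1])
    (hu3 : u3 = (1 / ρ2) • ![0, (a - c + Real.sqrt D) / (2 * b), 1])
    (hu1unit : u1 ⬝ᵥ u1 = 1) (hu3unit : u3 ⬝ᵥ u3 = 1)
    (U1 : M3) (hU1 : U1 = !![d, 0, 0; 0, a, b; 0, b, c])
    (heig1 : U1.mulVec u1 = ((a + c - Real.sqrt D) / 2) • u1)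
    (heig3 : U1.mulVec u3 = ((a + c + Real.sqrt D) / 2) • u3)
    (eA eB : V3) (heA : eA = ![0, 1, 0])
    (heB : eB = (1 / Real.sqrt 2) • ![0, 1, 1]) :
    (u1 ⬝ᵥ eA = -(u3 ⬝ᵥ eA) → a = c) ∧
    (u1 ⬝ᵥ eB = -(u3 ⬝ᵥ eB) → a = c) := by
  subst hU1 heA heB
  have hμ : (a + c - √D) / 2 ≠ (a + c + √D) / 2 := by linarith [Real.sqrt_pos.mpr hDpos]
  have key := monoclinic_compound_no_double_cluster_general hμ (by simp [hu1]) (by simp [hu3])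
    hu1unit hu3unit heig1 heig3
  refine ⟨fun h => ?_, fun h => absurd ?_ hb⟩
  · simpa [sub_eq_zero] using (key 1 0).mp (by rw [h, neg_sq])
  · have hB : (1 / √2) • ![0, 1, 1] = ![0, 1 / √2, 1 / √2] := by simp
    rw [hB] at h
    simpa using (key (1 / √2) (1 / √2)).mp (by rw [h, neg_sq])
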